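/- arXiv:1808.05029 — 2 statements merged into one kernel-verified Lean document; each statement's English description precedes it below -/
import Mathlib

section
/- Let Ω ⊂ 𝕋^N be a measurable set with |Ω| > 0 and let w ∈ L¹(𝕋^N) be a nonnegative function such that w^ε > 0 on Ω for all sufficiently small ε > 0. Then there exists a constant C, depending on w and Ω but not on ε, such that ‖(w^ε − w)/w^ε‖_{L¹(Ω)} ≤ C for all sufficiently small ε > 0. -/
/-!
Since `|(w^ε - w)/w^ε| ≤ 1 + w/w^ε` on `Ω`, it suffices to bound `∫_Ω w/w^ε`. Split the unit cube
into a grid of cells of diameter at most `ε/3`, about `(3N/ε)^N` of them. If `A` is the part of `Ω`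
in one cell and `x ∈ A`, then `η((x - y)/ε) = 1` for all `y ∈ A`, so `w^ε(x) ≥ ε^{-N} ∫_A w`
(`moll_lower_bound`). Hence `∫_A w/w^ε ≤ ε^N` (`lintegral_ratio_le`), and the sum over all cells is
bounded by `(4N)^N` uniformly in `ε ≤ 1`. The convolution integrand at `x ∈ Ω` is integrable because
a divergent Bochner integral would be `0`, whereas `w^ε(x) > 0`.
-/

open MeasureTheory Set ENNReal

noncomputable section

/-- Euclidean space `ℝ^N`. -/
abbrev Euc (N : ℕ) := EuclideanSpace ℝ (Fin N)

/-- A standard mollifier on `ℝ^N`: smooth, nonnegative, radial, of integral one,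
equal to `1` on the ball of radius `1/3`, vanishing outside the unit ball. -/
def IsMollifier {N : ℕ} (η : Euc N → ℝ) : Prop :=
  ContDiff ℝ (⊤ : ℕ∞) η ∧ (∀ x, 0 ≤ η x) ∧
    (∀ x y : Euc N, ‖x‖ = ‖y‖ → η x = η y) ∧
    (∫ x, η x) = 1 ∧
    (∀ x : Euc N, ‖x‖ ≤ 1 / 3 → η x = 1) ∧
    (∀ x : Euc N, 1 ≤ ‖x‖ → η x = 0)

/-- Mollification `w^ε = η^ε * w`, where `η^ε(ξ) = ε^{-N} η(ξ/ε)`. -/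
def moll {N : ℕ} (η : Euc N → ℝ) (ε : ℝ) (w : Euc N → ℝ) (x : Euc N) : ℝ :=
  ∫ ξ, (ε ^ N)⁻¹ * η (ε⁻¹ • ξ) * w (x - ξ)

/-- The inner domain `Ω^ε = {x ∈ Ω : dist(x, ∂Ω) > ε}`. -/
def innerSet {N : ℕ} (Ω : Set (Euc N)) (ε : ℝ) : Set (Euc N) :=
  {x ∈ Ω | ε < Metric.infDist x Ωᶜ}

/-- The Besov `B_p^{α,∞}(Q)` norm
`‖w‖_{L^p(Q)} + sup_{ξ ∈ Q} ‖w(·+ξ) - w‖_{L^p(Q ∩ (Q - ξ))} / |ξ|^α`. -/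
def besovNorm {N : ℕ} (p α : ℝ) (Q : Set (Euc N)) (w : Euc N → ℝ) : ℝ≥0∞ :=
  eLpNorm w (ENNReal.ofReal p) (volume.restrict Q)
    + ⨆ ξ ∈ Q, eLpNorm (fun x => w (x + ξ) - w x) (ENNReal.ofReal p)
        (volume.restrict (Q ∩ {x | x + ξ ∈ Q})) / ENNReal.ofReal (‖ξ‖ ^ α)

/-- A function on `ℝ^N` descends to the torus `𝕋^N` iff it is `1`-periodic in each
coordinate direction. -/
def TorusPeriodic {N : ℕ} (w : Euc N → ℝ) : Prop :=
  ∀ x : Euc N, ∀ i : Fin N, w (x + EuclideanSpace.single i 1) = w x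

/-- The fundamental domain `[0,1)^N` of the torus `𝕋^N`. -/
def unitCube (N : ℕ) : Set (Euc N) := {x | ∀ i : Fin N, x i ∈ Ico (0 : ℝ) 1}

lemma norm_le_of_coord {N : ℕ} (v : Euc N) (h : ℝ) (hh : 0 ≤ h) (hv : ∀ i, |v i| ≤ h) :
    ‖v‖ ≤ N * h := by
  rw [EuclideanSpace.norm_eq]
  apply Real.sqrt_le_iff.2 ⟨by positivity, ?_⟩
  have h1 : ∑ i, ‖v i‖ ^ 2 ≤ ∑ _i : Fin N, h ^ 2 := by
    apply Finset.sum_le_sum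
    intro i _
    exact pow_le_pow_left₀ (norm_nonneg _) (hv i) 2
  have h2 : ∑ _i : Fin N, h ^ 2 = N * h ^ 2 := by simp
  have h3 : (N : ℝ) ≤ (N : ℝ) ^ 2 := by
    exact_mod_cast Nat.le_self_pow (by norm_num) N
  calc _ ≤ N * h ^ 2 := h1.trans h2.le
    _ ≤ (N : ℝ) ^ 2 * h ^ 2 := by gcongr
    _ = _ := by ring

/-- On a set of diameter at most `ε/3` the kernel equals `ε^{-N}`, so `w^ε` dominates the rescaled
mass of `w` there. Positivity of `w^ε(x)` excludes the junk value of a divergent integral. -/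
lemma moll_lower_bound {N : ℕ} {η : Euc N → ℝ} (hη : IsMollifier η) {w : Euc N → ℝ}
    (hw0 : ∀ x, 0 ≤ w x) {A : Set (Euc N)} (hA : MeasurableSet A) {ε : ℝ} (hε : 0 < ε)
    (hdiam : ∀ x ∈ A, ∀ y ∈ A, ‖x - y‖ ≤ ε / 3) {x : Euc N} (hx : x ∈ A)
    (hm : 0 < moll η ε w x) :
    (ε ^ N)⁻¹ * ∫ y in A, w y ≤ moll η ε w x := by
  obtain ⟨-, hη0, -, -, hη1, -⟩ := hη
  have heq : moll η ε w x = ∫ y, (ε ^ N)⁻¹ * η (ε⁻¹ • (x - y)) * w y := by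
    rw [← integral_sub_left_eq_self _ volume x]
    simp [moll]
  rw [heq] at hm ⊢
  have hint : Integrable (fun y => (ε ^ N)⁻¹ * η (ε⁻¹ • (x - y)) * w y) := by
    by_contra hc
    rw [integral_undef hc] at hm
    exact lt_irrefl _ hm
  calc (ε ^ N)⁻¹ * ∫ y in A, w y = ∫ y in A, (ε ^ N)⁻¹ * η (ε⁻¹ • (x - y)) * w y := by
        rw [← integral_const_mul]
        apply setIntegral_congr_fun hA
        intro y hy
        have : ‖ε⁻¹ • (x - y)‖ ≤ 1 / 3 := by
          rw [norm_smul, Real.norm_of_nonneg (by positivity)]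
          calc ε⁻¹ * ‖x - y‖ ≤ ε⁻¹ * (ε / 3) := by gcongr; exact hdiam x hx y hy
            _ = 1 / 3 := by field_simp
        simp [hη1 _ this]
    _ ≤ _ := setIntegral_le_integral hint (Filter.Eventually.of_forall fun y =>
        mul_nonneg (mul_nonneg (by positivity) (hη0 _)) (hw0 y))

lemma lintegral_ratio_le {N : ℕ} {η : Euc N → ℝ} (hη : IsMollifier η) {w : Euc N → ℝ}
    (hw0 : ∀ x, 0 ≤ w x) {A : Set (Euc N)} (hA : MeasurableSet A) {ε : ℝ} (hε : 0 < ε)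
    (hdiam : ∀ x ∈ A, ∀ y ∈ A, ‖x - y‖ ≤ ε / 3) (hwA : IntegrableOn w A)
    (hm : ∀ x ∈ A, 0 < moll η ε w x) :
    ∫⁻ x in A, ENNReal.ofReal (w x / moll η ε w x) ≤ ENNReal.ofReal (ε ^ N) := by
  have hI0 : 0 ≤ ∫ y in A, w y := integral_nonneg hw0
  -- In the degenerate case `∫_A w = 0`, `w` vanishes almost everywhere on `A`.
  rcases hI0.eq_or_lt with h0 | hI
  · have hz : w =ᵐ[volume.restrict A] 0 :=
      (integral_eq_zero_iff_of_nonneg hw0 hwA).1 h0.symm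
    have : ∫⁻ x in A, ENNReal.ofReal (w x / moll η ε w x) = 0 := by
      rw [← lintegral_zero (μ := volume.restrict A)]
      apply lintegral_congr_ae
      filter_upwards [hz] with x hx
      simp [hx]
    simp [this]
  · set I := ∫ y in A, w y with hIdef
    have hc : 0 ≤ ε ^ N / I := by positivity
    calc ∫⁻ x in A, ENNReal.ofReal (w x / moll η ε w x)
        ≤ ∫⁻ x in A, ENNReal.ofReal (ε ^ N / I * w x) := by
          apply setLIntegral_mono' hA
          intro x hx
          apply ENNReal.ofReal_le_ofReal
          have hl := moll_lower_bound hη hw0 hA hε hdiam hx (hm x hx)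
          rw [← hIdef] at hl
          calc w x / moll η ε w x ≤ w x / ((ε ^ N)⁻¹ * I) :=
                div_le_div_of_nonneg_left (hw0 x) (by positivity) hl
            _ = ε ^ N / I * w x := by field_simp
      _ = ENNReal.ofReal (∫ x in A, ε ^ N / I * w x) :=
          (ofReal_integral_eq_lintegral_ofReal (hwA.const_mul _)
            (Filter.Eventually.of_forall fun x => mul_nonneg hc (hw0 x))).symm
      _ = ENNReal.ofReal (ε ^ N) := by
          rw [integral_const_mul, ← hIdef]
          congr 1
          field_simp

/-- The half-open grid cell of side `1/K` with lower corner `k/K`. -/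
def gridCell {N K : ℕ} (k : Fin N → Fin K) : Set (Euc N) :=
  {x | ∀ i, (k i : ℝ) ≤ K * x i ∧ K * x i < (k i : ℝ) + 1}

lemma measurableSet_gridCell {N K : ℕ} (k : Fin N → Fin K) : MeasurableSet (gridCell k) := by
  unfold gridCell
  measurability

lemma exists_mem_gridCell {N K : ℕ} (hK : 0 < K) {x : Euc N} (hx : x ∈ unitCube N) :
    ∃ k : Fin N → Fin K, x ∈ gridCell k := by
  have hK' : (0 : ℝ) < K := by exact_mod_cast hK
  have h0 : ∀ i, 0 ≤ K * x i := fun i => mul_nonneg hK'.le (hx i).1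
  refine ⟨fun i => ⟨⌊K * x i⌋₊, ?_⟩, fun i => ⟨Nat.floor_le (h0 i), Nat.lt_floor_add_one _⟩⟩
  rw [Nat.floor_lt (h0 i)]
  nlinarith [(hx i).2]

lemma norm_sub_le_of_mem_gridCell {N K : ℕ} (hK : 0 < K) {k : Fin N → Fin K} {x y : Euc N}
    (hx : x ∈ gridCell k) (hy : y ∈ gridCell k) : ‖x - y‖ ≤ N * (1 / K) := by
  have hK' : (0 : ℝ) < K := by exact_mod_cast hK
  apply norm_le_of_coord _ _ (by positivity)
  intro i
  have h1 := hx i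
  have h2 := hy i
  rw [le_div_iff₀ hK', PiLp.sub_apply, ← abs_of_pos hK', ← abs_mul, abs_le]
  constructor <;> nlinarith

lemma volume_unitCube_lt_top (N : ℕ) : volume (unitCube N) < ∞ := by
  apply lt_of_le_of_lt (measure_mono _) (measure_closedBall_lt_top (x := (0 : Euc N)) (r := N * 1))
  intro x hx
  rw [mem_closedBall_zero_iff]
  refine norm_le_of_coord x 1 zero_le_one fun i => ?_
  rw [abs_of_nonneg (hx i).1]
  exact (hx i).2.le

/-- **The `L¹` mollification-ratio bound** (Lemma 4.4 of
Akramov-Dębiec-Skipper-Wiedemann).  If `w ∈ L¹(𝕋^N)` is nonnegative, `Ω ⊆ 𝕋^N` has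
positive measure and `w^ε > 0` on `Ω` for all sufficiently small `ε > 0`, then
`‖(w^ε - w)/w^ε‖_{L¹(Ω)} ≤ C` for all sufficiently small `ε > 0`, with `C`
independent of `ε` (but possibly depending on `w` and `Ω`). -/
theorem mollification_ratio_L1_bound
    {N : ℕ} (hN : 1 ≤ N)
    (η : Euc N → ℝ) (hη : IsMollifier η)
    (w : Euc N → ℝ) (hper : TorusPeriodic w) (hw0 : ∀ x, 0 ≤ w x)
    (hwint : IntegrableOn w (unitCube N) volume)
    (Ω : Set (Euc N)) (hΩmeas : MeasurableSet Ω) (hΩsub : Ω ⊆ unitCube N)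
    (hΩpos : 0 < volume Ω)
    (ε₁ : ℝ) (hε₁ : 0 < ε₁)
    (hpos : ∀ ε : ℝ, 0 < ε → ε < ε₁ → ∀ x ∈ Ω, 0 < moll η ε w x) :
    ∃ C ε₂ : ℝ, 0 < ε₂ ∧ ∀ ε : ℝ, 0 < ε → ε < ε₂ →
      eLpNorm (fun x => (moll η ε w x - w x) / moll η ε w x) 1 (volume.restrict Ω)
        ≤ ENNReal.ofReal C := by
  refine ⟨(volume Ω).toReal + (4 * N) ^ N, min ε₁ 1, lt_min hε₁ one_pos, fun ε hε hlt => ?_⟩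
  have hm : ∀ x ∈ Ω, 0 < moll η ε w x := hpos ε hε (hlt.trans_le (min_le_left _ _))
  have hε1 : ε ≤ 1 := (hlt.trans_le (min_le_right _ _)).le
  have hN' : (1 : ℝ) ≤ N := by exact_mod_cast hN
  have hΩfin : volume Ω ≠ ∞ :=
    ((measure_mono hΩsub).trans_lt (volume_unitCube_lt_top N)).ne
  obtain ⟨K, hK⟩ : ∃ K : ℕ, K = ⌈3 * N / ε⌉₊ := ⟨_, rfl⟩
  have hKge : 3 * N / ε ≤ K := hK ▸ Nat.le_ceil _
  have hKpos' : (0 : ℝ) < K := lt_of_lt_of_le (by positivity) hKge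
  have hKpos : 0 < K := by exact_mod_cast hKpos'
  have hKε : K * ε ≤ 4 * N := by
    have h1 : (K : ℝ) < 3 * N / ε + 1 := hK ▸ Nat.ceil_lt_add_one (by positivity)
    have h2 : (3 * N / ε + 1) * ε = 3 * N + ε := by field_simp
    nlinarith
  have hside : (N : ℝ) * (1 / K) ≤ ε / 3 := by
    rw [div_le_iff₀ hε] at hKge
    rw [mul_one_div, div_le_div_iff₀ hKpos' (by norm_num)]
    linarith
  have hcover : Ω ⊆ ⋃ k : Fin N → Fin K, Ω ∩ gridCell k := fun x hx => by
    obtain ⟨k, hk⟩ := exists_mem_gridCell hKpos (hΩsub hx)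
    exact mem_iUnion.2 ⟨k, hx, hk⟩
  have hratio : ∫⁻ x in Ω, ENNReal.ofReal (w x / moll η ε w x)
      ≤ ENNReal.ofReal ((4 * N) ^ N) := by
    calc _ ≤ ∫⁻ x in ⋃ k : Fin N → Fin K, Ω ∩ gridCell k,
            ENNReal.ofReal (w x / moll η ε w x) := lintegral_mono_set hcover
      _ ≤ ∑' k : Fin N → Fin K, ∫⁻ x in Ω ∩ gridCell k,
            ENNReal.ofReal (w x / moll η ε w x) := lintegral_iUnion_le _ _
      _ = ∑ k : Fin N → Fin K, ∫⁻ x in Ω ∩ gridCell k,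
            ENNReal.ofReal (w x / moll η ε w x) := tsum_fintype _
      _ ≤ ∑ _k : Fin N → Fin K, ENNReal.ofReal (ε ^ N) := by
          refine Finset.sum_le_sum fun k _ => ?_
          exact lintegral_ratio_le hη hw0 (hΩmeas.inter (measurableSet_gridCell k)) hε
            (fun x hx y hy => (norm_sub_le_of_mem_gridCell hKpos hx.2 hy.2).trans hside)
            (hwint.mono_set (inter_subset_left.trans hΩsub)) (fun x hx => hm x hx.1)
      _ = ENNReal.ofReal ((K * ε) ^ N) := by
          rw [← ENNReal.ofReal_sum_of_nonneg fun _ _ => by positivity]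
          simp [mul_pow]
      _ ≤ _ := by gcongr
  rw [eLpNorm_one_eq_lintegral_enorm]
  calc _ ≤ ∫⁻ x in Ω, (1 + ENNReal.ofReal (w x / moll η ε w x)) := by
        apply setLIntegral_mono' hΩmeas
        intro x hx
        have hmx := hm x hx
        have hr : 0 ≤ w x / moll η ε w x := div_nonneg (hw0 x) hmx.le
        rw [← ENNReal.ofReal_one, ← ENNReal.ofReal_add zero_le_one hr, ← ofReal_norm]
        apply ENNReal.ofReal_le_ofReal
        rw [sub_div, div_self hmx.ne', Real.norm_eq_abs, abs_le]
        constructor <;> linarith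
    _ = volume Ω + ∫⁻ x in Ω, ENNReal.ofReal (w x / moll η ε w x) := by
        rw [lintegral_add_left measurable_const]
        simp
    _ ≤ ENNReal.ofReal (volume Ω).toReal + ENNReal.ofReal ((4 * N) ^ N) := by
        rw [ENNReal.ofReal_toReal hΩfin]
        gcongr
    _ = _ := (ENNReal.ofReal_add (by positivity) (by positivity)).symm

end
end

section
/- Let p > 1 and define f : 𝕋 → ℝ by f(x) = Σ_{i=1}^∞ χ_{[1/i, 1/i + 2^{−i}]}(x). Then along the sequence ε_i = 1/(2i²) one has ‖f/f^{ε_i}‖_{L^p(𝕋)} ≥ C · 2^{i(1−1/p)}/(2i²) → ∞ as i → ∞ (for some constant C > 0); in particular ‖(f^ε − f)/f^ε‖_{L^p} cannot be bounded uniformly in ε. Hence the uniform bound of the L¹ mollification-ratio lemma fails when L¹ is replaced by L^p with p > 1. -/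
/-!
The spikes `[1/i, 1/i + 2⁻ⁱ]` are pairwise disjoint, and for `i ≥ 7` the `i`-th one stays further
than `ε = 1/(2i²)` away from all the others (`spikes_le_indicator`).  On it the mollification
therefore sees only a mass `2⁻ⁱ`, so `0 < f^ε ≤ 2i² M 2⁻ⁱ` with `M` a bound for `η` (`moll_pos`,
`moll_le`), i.e. `f / f^ε ≥ 2ⁱ / (2i² M)` on a set of measure `2⁻ⁱ` (`ratio_ge`).  Taking `L^p` norms
over that set alone (`le_eLpNorm_of_spike`) gives the lower bound `2^{i(1-1/p)} / (2i² M)`.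
The finitely many `i < 7` are absorbed in the constant, using `f / f^ε ≥ 1` on the spike `[1/2, 3/4]`.
On the same set `|(f^ε - f) / f^ε| ≥ f / f^ε - 1`, so that quotient is unbounded in `L^p` as well.
-/

open MeasureTheory Set ENNReal

noncomputable section

/-- A standard mollifier on `ℝ`: smooth, nonnegative, even (radial), of integral one,
equal to `1` on `[-1/3, 1/3]`, vanishing outside `[-1, 1]`. -/
def IsMollifier1 (η : ℝ → ℝ) : Prop :=
  ContDiff ℝ (⊤ : ℕ∞) η ∧ (∀ x, 0 ≤ η x) ∧
    (∀ x y : ℝ, |x| = |y| → η x = η y) ∧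
    (∫ x, η x) = 1 ∧
    (∀ x : ℝ, |x| ≤ 1 / 3 → η x = 1) ∧
    (∀ x : ℝ, 1 ≤ |x| → η x = 0)

/-- Mollification `f^ε = η^ε * f` on `ℝ`, where `η^ε(ξ) = ε⁻¹ η(ξ/ε)`. -/
def moll1 (η : ℝ → ℝ) (ε : ℝ) (f : ℝ → ℝ) (x : ℝ) : ℝ :=
  ∫ ξ, ε⁻¹ * η (ε⁻¹ * ξ) * f (x - ξ)

/-- The spike function `f(x) = Σ_{i=1}^∞ χ_{[1/i, 1/i + 2^{-i}]}(x)` on the torus `𝕋`,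
realised as the `1`-periodic function obtained by evaluating at the fractional part. -/
def spikes : ℝ → ℝ := fun x =>
  ∑' i : ℕ, indicator
    (Icc ((i + 1 : ℝ))⁻¹ (((i + 1 : ℝ))⁻¹ + (2 : ℝ)⁻¹ ^ (i + 1)))
    (fun _ => (1 : ℝ)) (Int.fract x)

/-- The interval `[1/i, 1/i + 2⁻ⁱ]` with `i = k + 1`, indexed from zero as in `spikes`.  For `k = 0`
it starts at `1`, so it contains no fractional part and contributes nothing on the torus. -/
def spikeSet (k : ℕ) : Set ℝ :=
  Icc ((k + 1 : ℝ))⁻¹ (((k + 1 : ℝ))⁻¹ + (2 : ℝ)⁻¹ ^ (k + 1))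

theorem mul_lt_two_pow (k : ℕ) : (k : ℝ) * (k + 1) < 2 ^ (k + 1) := by
  have h : k * (k + 1) < 2 ^ (k + 1) := by
    induction k with
    | zero => simp
    | succ n ih =>
      have h1 : n < 2 ^ n := Nat.lt_two_pow_self
      rw [pow_succ] at ih
      rw [pow_succ, pow_succ]
      nlinarith
  exact_mod_cast h

theorem two_mul_sq_le_two_pow (i : ℕ) (hi : 7 ≤ i) : 2 * (i : ℝ) ^ 2 ≤ 2 ^ i := by
  induction i, hi using Nat.le_induction with
  | base => norm_num
  | succ n hn ih =>
    have : (7 : ℝ) ≤ n := by exact_mod_cast hn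
    rw [pow_succ (2 : ℝ)]; push_cast; nlinarith

/-- Consecutive spikes are separated. -/
theorem spike_right_lt (k : ℕ) (hk : 1 ≤ k) :
    ((k + 1 : ℝ))⁻¹ + (2 : ℝ)⁻¹ ^ (k + 1) < (k : ℝ)⁻¹ := by
  have hk' : (1 : ℝ) ≤ k := by exact_mod_cast hk
  have h1 : (2 : ℝ)⁻¹ ^ (k + 1) < ((k : ℝ) * (k + 1))⁻¹ := by
    rw [inv_pow]
    exact inv_strictAnti₀ (by positivity) (mul_lt_two_pow k)
  have h2 : (k : ℝ)⁻¹ - ((k + 1 : ℝ))⁻¹ = ((k : ℝ) * (k + 1))⁻¹ := by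
    field_simp; ring
  linarith

theorem spikeSet_disjoint_of_lt {j k : ℕ} (h : j < k) {y : ℝ} (hj : y ∈ spikeSet j)
    (hk : y ∈ spikeSet k) : False := by
  have h1 := spike_right_lt k (by omega)
  have h2 : (k : ℝ)⁻¹ ≤ ((j + 1 : ℝ))⁻¹ := by
    apply inv_anti₀ (by positivity); exact_mod_cast h
  linarith [hj.1, hk.2]

/-- Since the spikes are disjoint, their sum is the indicator of their union. -/
theorem spikes_eq (x : ℝ) :
    spikes x = indicator (⋃ k, spikeSet k) (fun _ => (1 : ℝ)) (Int.fract x) := by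
  unfold spikes
  by_cases h : Int.fract x ∈ ⋃ k, spikeSet k
  · obtain ⟨k, hk⟩ := mem_iUnion.1 h
    rw [indicator_of_mem h, tsum_eq_single k]
    · exact indicator_of_mem (s := spikeSet k) hk _
    · intro j hj
      refine indicator_of_notMem (s := spikeSet j) (fun hj' => ?_) _
      rcases lt_or_gt_of_ne hj with h | h
      · exact spikeSet_disjoint_of_lt h hj' hk
      · exact spikeSet_disjoint_of_lt h hk hj'
  · rw [indicator_of_notMem h]
    have : ∀ j : ℕ, indicator (spikeSet j) (fun _ => (1 : ℝ)) (Int.fract x) = 0 := fun j =>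
      indicator_of_notMem (fun hj => h (mem_iUnion.2 ⟨j, hj⟩)) _
    exact (tsum_congr this).trans tsum_zero

theorem spikes_nonneg (x : ℝ) : 0 ≤ spikes x := by
  rw [spikes_eq]; exact indicator_nonneg (fun _ _ => zero_le_one) _

theorem spikes_le_one (x : ℝ) : spikes x ≤ 1 := by
  rw [spikes_eq]; exact indicator_le_self' (fun _ _ => zero_le_one) _

theorem measurable_spikes : Measurable spikes := by
  have : spikes = fun x => indicator (⋃ k, spikeSet k) (fun _ => (1 : ℝ)) (Int.fract x) :=
    funext spikes_eq
  rw [this]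
  exact (measurable_const.indicator
    (MeasurableSet.iUnion fun k => measurableSet_Icc)).comp measurable_fract

theorem spikeSet_subset {k : ℕ} (hk : 1 ≤ k) : spikeSet k ⊆ Ico 0 1 := by
  intro y hy
  have h1 := spike_right_lt k hk
  have h2 : (k : ℝ)⁻¹ ≤ 1 := inv_le_one_of_one_le₀ (by exact_mod_cast hk)
  have h3 : (0 : ℝ) < ((k + 1 : ℝ))⁻¹ := by positivity
  exact ⟨by linarith [hy.1], by linarith [hy.2]⟩

theorem spikes_eq_one {k : ℕ} (hk : 1 ≤ k) {x : ℝ} (hx : x ∈ spikeSet k) : spikes x = 1 := by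
  rw [spikes_eq, Int.fract_eq_self.2 (spikeSet_subset hk hx)]
  exact indicator_of_mem (mem_iUnion.2 ⟨k, hx⟩) _

theorem kernel_integrable {η : ℝ → ℝ} (hη : IsMollifier1 η) {ε : ℝ} (hε : 0 < ε) :
    Integrable (fun ξ => ε⁻¹ * η (ε⁻¹ * ξ)) := by
  have h : Integrable η := by
    by_contra h
    have := hη.2.2.2.1
    rw [integral_undef h] at this
    exact zero_ne_one this
  exact (h.comp_mul_left' (inv_ne_zero hε.ne')).const_mul _

theorem kernel_integral {η : ℝ → ℝ} (hη : IsMollifier1 η) {ε : ℝ} (hε : 0 < ε) :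
    ∫ ξ, ε⁻¹ * η (ε⁻¹ * ξ) = 1 := by
  rw [integral_const_mul, Measure.integral_comp_mul_left η ε⁻¹, hη.2.2.2.1]
  simp [abs_of_pos hε, hε.ne']

theorem moll_integrable {η : ℝ → ℝ} (hη : IsMollifier1 η) {ε : ℝ} (hε : 0 < ε) (x : ℝ) :
    Integrable (fun ξ => ε⁻¹ * η (ε⁻¹ * ξ) * spikes (x - ξ)) := by
  refine (kernel_integrable hη hε).mul_bdd (c := 1) ?_ ?_
  · exact (measurable_spikes.comp (measurable_const.sub measurable_id)).aestronglyMeasurable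
  · refine Filter.Eventually.of_forall fun ξ => ?_
    rw [Real.norm_of_nonneg (spikes_nonneg _)]
    exact spikes_le_one _

theorem moll_le_one {η : ℝ → ℝ} (hη : IsMollifier1 η) {ε : ℝ} (hε : 0 < ε) (x : ℝ) :
    moll1 η ε spikes x ≤ 1 := by
  rw [← kernel_integral hη hε]
  refine integral_mono (moll_integrable hη hε x) (kernel_integrable hη hε) fun ξ => ?_
  exact mul_le_of_le_one_right (mul_nonneg (by positivity) (hη.2.1 _)) (spikes_le_one _)

/-- Positivity of the mollification on a spike: the kernel is at least `ε⁻¹` on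
`[-ε/3, ε/3]`, which meets the translated spike in a nondegenerate interval. -/
theorem moll_pos {η : ℝ → ℝ} (hη : IsMollifier1 η) {ε : ℝ} (hε : 0 < ε) {k : ℕ} (hk : 1 ≤ k)
    {x : ℝ} (hx : x ∈ spikeSet k) : 0 < moll1 η ε spikes x := by
  set a : ℝ := ((k + 1 : ℝ))⁻¹ with ha
  set b : ℝ := a + (2 : ℝ)⁻¹ ^ (k + 1) with hb
  have hab : a < b := by rw [hb]; linarith [show (0 : ℝ) < (2 : ℝ)⁻¹ ^ (k + 1) by positivity]
  have hxa : a ≤ x := hx.1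
  have hxb : x ≤ b := hx.2
  set l := max (-(ε / 3)) (x - b)
  set r := min (ε / 3) (x - a)
  have hlr : l < r := by
    simp only [l, r, max_lt_iff, lt_min_iff]
    refine ⟨⟨?_, ?_⟩, ?_, ?_⟩ <;> linarith
  have hint : Integrable (indicator (Icc l r) (fun _ : ℝ => ε⁻¹)) :=
    (integrable_indicator_iff measurableSet_Icc).2 (by simp)
  have hval : ∫ ξ, indicator (Icc l r) (fun _ : ℝ => ε⁻¹) ξ = (r - l) * ε⁻¹ := by
    rw [integral_indicator measurableSet_Icc]
    simp [hlr.le]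
  have hpos : 0 < (r - l) * ε⁻¹ := mul_pos (sub_pos.2 hlr) (by positivity)
  refine hpos.trans_le ?_
  rw [← hval]
  refine integral_mono hint (moll_integrable hη hε x) fun ξ => ?_
  by_cases hξ : ξ ∈ Icc l r
  · rw [indicator_of_mem hξ]
    have h1 : -(ε / 3) ≤ ξ := (le_max_left _ _).trans hξ.1
    have h2 : x - b ≤ ξ := (le_max_right _ _).trans hξ.1
    have h3 : ξ ≤ ε / 3 := hξ.2.trans (min_le_left _ _)
    have h4 : ξ ≤ x - a := hξ.2.trans (min_le_right _ _)
    have h5 : η (ε⁻¹ * ξ) = 1 := by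
      apply hη.2.2.2.2.1
      rw [abs_mul, abs_of_pos (inv_pos.2 hε), inv_mul_le_iff₀ hε]
      rw [abs_le]; constructor <;> linarith
    have h6 : spikes (x - ξ) = 1 :=
      spikes_eq_one hk ⟨by linarith, by linarith⟩
    simp [h5, h6]
  · rw [indicator_of_notMem hξ]
    exact mul_nonneg (mul_nonneg (by positivity) (hη.2.1 _)) (spikes_nonneg _)

theorem exists_bound {η : ℝ → ℝ} (hη : IsMollifier1 η) : ∃ M : ℝ, 1 ≤ M ∧ ∀ x, η x ≤ M := by
  obtain ⟨M, hM⟩ := (isCompact_Icc (a := (-1 : ℝ)) (b := 1)).bddAbove_image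
    (hη.1.continuous.continuousOn)
  refine ⟨max M 1, le_max_right _ _, fun x => ?_⟩
  by_cases hx : |x| ≤ 1
  · exact (hM ⟨x, abs_le.1 hx, rfl⟩).trans (le_max_left _ _)
  · rw [hη.2.2.2.2.2 x (not_le.1 hx).le]
    exact zero_le_one.trans (le_max_right _ _)

/-- Within distance `ε = 1/(2i²)` of the spike at `1/i` (`i = k + 1 ≥ 7`), no other spike occurs. -/
theorem spikes_le_indicator {k : ℕ} (hk : 6 ≤ k) {x ξ : ℝ} (hx : x ∈ spikeSet k)
    (hξ : |ξ| ≤ 1 / (2 * ((k + 1 : ℕ) : ℝ) ^ 2)) :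
    spikes (x - ξ) ≤ indicator (spikeSet k) (fun _ => (1 : ℝ)) (x - ξ) := by
  by_cases hy : x - ξ ∈ spikeSet k
  · rw [indicator_of_mem hy]; exact spikes_le_one _
  rw [indicator_of_notMem hy]
  have hk' : (6 : ℝ) ≤ k := by exact_mod_cast hk
  have hpow := two_mul_sq_le_two_pow (k + 1) (by omega)
  push_cast at hpow hξ
  obtain ⟨hξ1, hξ2⟩ := abs_le.1 hξ
  have hδ : (2 : ℝ)⁻¹ ^ (k + 1) ≤ 1 / (2 * ((k : ℝ) + 1) ^ 2) := by
    rw [inv_pow, ← one_div]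
    exact one_div_le_one_div_of_le (by positivity) hpow
  have hδ' : (2 : ℝ)⁻¹ ^ (k + 1 + 1) ≤ 1 / (2 * ((k : ℝ) + 1) ^ 2) / 2 := by
    rw [pow_succ]; linarith
  have hhi : x - ξ < (k : ℝ)⁻¹ := by
    have h : ((k : ℝ) + 1)⁻¹ + 2 * (1 / (2 * ((k : ℝ) + 1) ^ 2)) < (k : ℝ)⁻¹ := by
      rw [← sub_pos]
      have : (k : ℝ)⁻¹ - (((k : ℝ) + 1)⁻¹ + 2 * (1 / (2 * ((k : ℝ) + 1) ^ 2)))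
        = 1 / (k * (k + 1) ^ 2) := by field_simp; ring
      rw [this]; positivity
    have := hx.2
    linarith
  have hlo : ((k : ℝ) + 1 + 1)⁻¹ + (2 : ℝ)⁻¹ ^ (k + 1 + 1) < x - ξ := by
    have h : ((k : ℝ) + 1 + 1)⁻¹ + 3 / 2 * (1 / (2 * ((k : ℝ) + 1) ^ 2)) < ((k : ℝ) + 1)⁻¹ := by
      rw [← sub_pos]
      have : ((k : ℝ) + 1)⁻¹ - (((k : ℝ) + 1 + 1)⁻¹ + 3 / 2 * (1 / (2 * ((k : ℝ) + 1) ^ 2)))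
        = (k - 2) / (4 * (k + 1) ^ 2 * (k + 1 + 1)) := by field_simp; ring
      rw [this]
      exact div_pos (by linarith) (by positivity)
    have := hx.1
    linarith
  have hpos : 0 < x - ξ := lt_trans (by positivity) hlo
  have hlt : x - ξ < 1 := hhi.trans_le (inv_le_one_of_one_le₀ (by linarith))
  rw [spikes_eq, Int.fract_eq_self.2 ⟨hpos.le, hlt⟩, indicator_of_notMem]
  rintro h
  obtain ⟨j, hj⟩ := mem_iUnion.1 h
  rcases lt_trichotomy j k with hjk | rfl | hjk
  · have : (k : ℝ)⁻¹ ≤ ((j : ℝ) + 1)⁻¹ := inv_anti₀ (by positivity) (by exact_mod_cast hjk)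
    linarith [hj.1]
  · exact hy hj
  · have h1 : ((j : ℝ) + 1)⁻¹ ≤ ((k : ℝ) + 1 + 1)⁻¹ :=
      inv_anti₀ (by positivity) (by exact_mod_cast Nat.succ_le_succ hjk)
    have h2 : (2 : ℝ)⁻¹ ^ (j + 1) ≤ (2 : ℝ)⁻¹ ^ (k + 1 + 1) :=
      pow_le_pow_of_le_one (by norm_num) (by norm_num) (by omega)
    linarith [hj.2]

/-- On the spike at `1/i` the mollification sees only that spike, of mass `2⁻ⁱ`. -/
theorem moll_le {η : ℝ → ℝ} (hη : IsMollifier1 η) {M : ℝ} (hM1 : 1 ≤ M) (hM : ∀ x, η x ≤ M)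
    {k : ℕ} (hk : 6 ≤ k) {x : ℝ} (hx : x ∈ spikeSet k) :
    moll1 η (1 / (2 * ((k + 1 : ℕ) : ℝ) ^ 2)) spikes x
      ≤ 2 * ((k + 1 : ℕ) : ℝ) ^ 2 * M * (2 : ℝ)⁻¹ ^ (k + 1) := by
  set N : ℝ := 2 * ((k + 1 : ℕ) : ℝ) ^ 2 with hN
  have hNpos : 0 < N := by positivity
  set T : Set ℝ := Icc (x - (((k + 1 : ℝ))⁻¹ + (2 : ℝ)⁻¹ ^ (k + 1))) (x - ((k + 1 : ℝ))⁻¹) with hT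
  have hint : Integrable (indicator T (fun _ : ℝ => N * M)) :=
    (integrable_indicator_iff measurableSet_Icc).2
      (continuous_const.integrableOn_Icc)
  have hval : ∫ ξ, indicator T (fun _ : ℝ => N * M) ξ = N * M * (2 : ℝ)⁻¹ ^ (k + 1) := by
    rw [integral_indicator measurableSet_Icc]
    simp
    ring
  rw [← hval]
  refine integral_mono_of_nonneg (Filter.Eventually.of_forall fun ξ => ?_) hint
    (Filter.Eventually.of_forall fun ξ => ?_)
  · exact mul_nonneg (mul_nonneg (by positivity) (hη.2.1 _)) (spikes_nonneg _)
  · simp only [one_div, inv_inv]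
    have hTnn : 0 ≤ indicator T (fun _ : ℝ => N * M) ξ :=
      indicator_nonneg (fun _ _ => by positivity) _
    by_cases hξ : |ξ| ≤ 1 / N
    · have h1 := spikes_le_indicator hk hx hξ
      have h0 := spikes_nonneg (x - ξ)
      by_cases hy : x - ξ ∈ spikeSet k
      · have : ξ ∈ T := ⟨by linarith [hy.2], by linarith [hy.1]⟩
        rw [indicator_of_mem this]
        have h2 := spikes_le_one (x - ξ)
        have h3 := hM (N * ξ)
        have h4 := hη.2.1 (N * ξ)
        exact (mul_le_of_le_one_right (by positivity) h2).trans
          (mul_le_mul_of_nonneg_left h3 hNpos.le)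
      · rw [indicator_of_notMem hy] at h1
        rw [le_antisymm h1 h0, mul_zero]; exact hTnn
    · have : η (N * ξ) = 0 := by
        apply hη.2.2.2.2.2
        rw [abs_mul, abs_of_pos hNpos]
        rw [not_le, div_lt_iff₀' hNpos] at hξ
        exact hξ.le
      rw [this]; simpa using hTnn

/-- Lower bound of an `L^p(𝕋)` norm by the contribution of a single spike, of measure `2⁻⁽ᵏ⁺¹⁾`. -/
theorem le_eLpNorm_of_spike {p : ℝ} (hp : 1 < p) {k : ℕ} (hk : 1 ≤ k) {g : ℝ → ℝ} {c : ℝ}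
    (h : ∀ x ∈ spikeSet k, c ≤ |g x|) :
    ENNReal.ofReal (c * ((2 : ℝ)⁻¹ ^ (k + 1)) ^ (1 / p))
      ≤ eLpNorm g (ENNReal.ofReal p) (volume.restrict (Ico (0 : ℝ) 1)) := by
  rcases lt_or_ge c 0 with hc | hc
  · rw [ENNReal.ofReal_of_nonpos]
    · exact zero_le
    · exact mul_nonpos_of_nonpos_of_nonneg hc.le (by positivity)
  have hms : MeasurableSet (spikeSet k) := measurableSet_Icc
  have hp0 : ENNReal.ofReal p ≠ 0 := by simp; linarith
  have hvol : volume.restrict (Ico (0 : ℝ) 1) (spikeSet k)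
      = ENNReal.ofReal ((2 : ℝ)⁻¹ ^ (k + 1)) := by
    rw [Measure.restrict_apply hms, inter_eq_self_of_subset_left (spikeSet_subset hk), spikeSet,
      Real.volume_Icc]
    congr 1; ring
  have := eLpNorm_indicator_const (μ := volume.restrict (Ico (0 : ℝ) 1)) (c := c) hms hp0
    ENNReal.ofReal_ne_top
  rw [hvol, ENNReal.toReal_ofReal (by linarith),
    ENNReal.ofReal_rpow_of_nonneg (by positivity) (by positivity),
    Real.enorm_of_nonneg hc, ← ENNReal.ofReal_mul hc] at this
  rw [← this]
  refine eLpNorm_mono fun x => ?_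
  by_cases hx : x ∈ spikeSet k
  · rw [indicator_of_mem hx, Real.norm_of_nonneg hc]; exact h x hx
  · rw [indicator_of_notMem hx]; simp

/-- The lower bound for `f / f^ε` on the spike at `1/i`. -/
theorem ratio_ge {η : ℝ → ℝ} (hη : IsMollifier1 η) {M : ℝ} (hM1 : 1 ≤ M) (hM : ∀ x, η x ≤ M)
    {i : ℕ} (hi : 7 ≤ i) {x : ℝ} (hx : x ∈ spikeSet (i - 1)) :
    2 ^ i / (2 * (i : ℝ) ^ 2 * M) ≤ spikes x / moll1 η (1 / (2 * (i : ℝ) ^ 2)) spikes x := by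
  obtain ⟨k, rfl⟩ : ∃ k, i = k + 1 := ⟨i - 1, by omega⟩
  rw [Nat.add_sub_cancel] at hx
  have hpos := moll_pos hη (ε := 1 / (2 * ((k + 1 : ℕ) : ℝ) ^ 2)) (by positivity) (by omega) hx
  have hle := moll_le hη hM1 hM (by omega) hx
  rw [spikes_eq_one (by omega) hx, div_le_div_iff₀ (by positivity) hpos]
  calc _ ≤ 2 ^ (k + 1) * (2 * ((k + 1 : ℕ) : ℝ) ^ 2 * M * (2 : ℝ)⁻¹ ^ (k + 1)) := by gcongr
    _ = 1 * (2 * ((k + 1 : ℕ) : ℝ) ^ 2 * M) := by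
      rw [inv_pow]; field_simp

theorem two_pow_mul_rpow (i : ℕ) (p : ℝ) :
    (2 : ℝ) ^ i * ((2 : ℝ)⁻¹ ^ i) ^ (1 / p) = (2 : ℝ) ^ ((i : ℝ) * (1 - 1 / p)) := by
  rw [inv_pow, Real.inv_rpow (by positivity), ← Real.rpow_natCast, ← Real.rpow_mul (by norm_num),
    ← Real.rpow_neg (by norm_num), ← Real.rpow_add (by norm_num)]
  congr 1; ring

theorem tendsto_lower {p : ℝ} (hp : 1 < p) {C : ℝ} (hC : 0 < C) :
    Filter.Tendsto (fun i : ℕ => C * (2 : ℝ) ^ ((i : ℝ) * (1 - 1 / p)) / (2 * (i : ℝ) ^ 2))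
      Filter.atTop Filter.atTop := by
  have ha : 0 < 1 - 1 / p := by
    rw [sub_pos, div_lt_one (by linarith)]; exact hp
  have h := (tendsto_exp_mul_div_rpow_atTop 2 (Real.log 2 * (1 - 1 / p))
    (mul_pos (Real.log_pos (by norm_num)) ha)).comp tendsto_natCast_atTop_atTop
  refine (h.const_mul_atTop (show 0 < C / 2 by positivity)).congr fun i => ?_
  simp only [Function.comp]
  rw [Real.rpow_def_of_pos (by norm_num : (0 : ℝ) < 2)]
  rw [show Real.log 2 * (1 - 1 / p) * (i : ℝ) = Real.log 2 * (i * (1 - 1 / p)) by ring,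
    Real.rpow_ofNat]
  ring

/-- **Failure of the mollification-ratio bound in `L^p`, `p > 1`** (Section 4.1 of
Akramov-Dębiec-Skipper-Wiedemann).  For the spike function
`f = Σ_{i≥1} χ_{[1/i, 1/i + 2^{-i}]}` on `𝕋` and `ε_i = 1/(2i²)` one has
`‖f/f^{ε_i}‖_{L^p(𝕋)} ≥ C 2^{i(1-1/p)}/(2i²) → ∞`; in particular
`‖(f^ε - f)/f^ε‖_{L^p(𝕋)}` is not bounded uniformly in `ε`, so the `L¹`
mollification-ratio lemma fails in `L^p` for `p > 1`. -/
theorem spikes_Lp_ratio_blowup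
    (η : ℝ → ℝ) (hη : IsMollifier1 η) (p : ℝ) (hp : 1 < p) :
    -- the quantitative lower bound along `ε_i = 1/(2i²)`
    (∃ C : ℝ, 0 < C ∧ ∀ i : ℕ, 1 ≤ i →
      ENNReal.ofReal (C * (2 : ℝ) ^ ((i : ℝ) * (1 - 1 / p)) / (2 * (i : ℝ) ^ 2))
        ≤ eLpNorm (fun x => spikes x / moll1 η (1 / (2 * (i : ℝ) ^ 2)) spikes x)
            (ENNReal.ofReal p) (volume.restrict (Ico (0 : ℝ) 1))) ∧
    -- consequently `‖f/f^{ε_i}‖_{L^p(𝕋)} → ∞`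
    Filter.Tendsto
      (fun i : ℕ => eLpNorm (fun x => spikes x / moll1 η (1 / (2 * (i : ℝ) ^ 2)) spikes x)
          (ENNReal.ofReal p) (volume.restrict (Ico (0 : ℝ) 1)))
      Filter.atTop (nhds ⊤) ∧
    -- and `‖(f^ε - f)/f^ε‖_{L^p(𝕋)}` admits no bound uniform in `ε`
    ¬ ∃ C : ℝ, ∀ ε : ℝ, 0 < ε → ε < 1 →
        eLpNorm (fun x => (moll1 η ε spikes x - spikes x) / moll1 η ε spikes x)
            (ENNReal.ofReal p) (volume.restrict (Ico (0 : ℝ) 1))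
          ≤ ENNReal.ofReal C := by
  obtain ⟨M, hM1, hM⟩ := exists_bound hη
  have hM0 : 0 < M := by linarith
  have hinv0 : 0 < 1 / p := by positivity
  have hinv1 : 1 / p ≤ 1 := by rw [div_le_one (by linarith)]; exact hp.le
  have key : ∃ C : ℝ, 0 < C ∧ ∀ i : ℕ, 1 ≤ i →
      ENNReal.ofReal (C * (2 : ℝ) ^ ((i : ℝ) * (1 - 1 / p)) / (2 * (i : ℝ) ^ 2))
        ≤ eLpNorm (fun x => spikes x / moll1 η (1 / (2 * (i : ℝ) ^ 2)) spikes x)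
            (ENNReal.ofReal p) (volume.restrict (Ico (0 : ℝ) 1)) := by
    refine ⟨min (1 / M) (1 / 2 ^ 9), by positivity, fun i hi => ?_⟩
    have hi1 : (1 : ℝ) ≤ i := by exact_mod_cast hi
    rcases le_or_gt 7 i with h7 | h7
    · have h := le_eLpNorm_of_spike hp (k := i - 1) (by omega)
        (g := fun x => spikes x / moll1 η (1 / (2 * (i : ℝ) ^ 2)) spikes x)
        (fun x hx => (ratio_ge hη hM1 hM h7 hx).trans (le_abs_self _))
      refine le_trans (ENNReal.ofReal_le_ofReal ?_) h
      rw [Nat.sub_add_cancel hi, div_mul_eq_mul_div, two_pow_mul_rpow]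
      calc _ ≤ 1 / M * (2 : ℝ) ^ ((i : ℝ) * (1 - 1 / p)) / (2 * (i : ℝ) ^ 2) := by
            gcongr; exact min_le_left _ _
        _ = _ := by field_simp
    · -- For the finitely many small `i` the spike `[1/2, 3/4]` and the bound `f^ε ≤ 1` suffice.
      have hε : 0 < 1 / (2 * (i : ℝ) ^ 2) := by positivity
      have h := le_eLpNorm_of_spike hp (k := 1) le_rfl (c := 1)
        (g := fun x => spikes x / moll1 η (1 / (2 * (i : ℝ) ^ 2)) spikes x)
        (fun x hx => by
          rw [spikes_eq_one le_rfl hx]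
          refine le_trans ?_ (le_abs_self _)
          rw [one_le_div (moll_pos hη hε le_rfl hx)]
          exact moll_le_one hη hε x)
      refine le_trans (ENNReal.ofReal_le_ofReal ?_) h
      have h1 : (2 : ℝ) ^ ((i : ℝ) * (1 - 1 / p)) ≤ 2 ^ 6 := by
        rw [← Real.rpow_natCast]
        apply Real.rpow_le_rpow_of_exponent_le (by norm_num)
        have : (i : ℝ) ≤ 6 := by exact_mod_cast Nat.lt_succ_iff.1 h7
        push_cast
        nlinarith
      have h2 : (1 / 4 : ℝ) ≤ ((2 : ℝ)⁻¹ ^ (1 + 1)) ^ (1 / p) := by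
        have := Real.rpow_le_rpow_of_exponent_ge (x := (2 : ℝ)⁻¹ ^ (1 + 1)) (by positivity)
          (by norm_num) hinv1
        rw [Real.rpow_one] at this
        refine le_trans (by norm_num) this
      have h3 : min (1 / M) (1 / 2 ^ 9) * (2 : ℝ) ^ ((i : ℝ) * (1 - 1 / p)) ≤ 1 / 2 ^ 9 * 2 ^ 6 := by
        gcongr; exact min_le_right _ _
      rw [one_mul]
      refine le_trans ?_ h2
      rw [div_le_iff₀ (by positivity)]
      nlinarith
  refine ⟨key, ?_, ?_⟩
  · obtain ⟨C, hC, h⟩ := key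
    refine tendsto_nhds_top_mono
      (ENNReal.tendsto_ofReal_nhds_top.2 (tendsto_lower hp hC)) ?_
    filter_upwards [Filter.eventually_ge_atTop 1] with i hi using h i hi
  · rintro ⟨C, hC⟩
    obtain ⟨i, hi, h7⟩ := (((tendsto_lower hp (C := 1 / M) (by positivity)).eventually_gt_atTop
      (|C| + 1)).and (Filter.eventually_ge_atTop 7)).exists
    have hi7 : (7 : ℝ) ≤ i := by exact_mod_cast h7
    have hε : 0 < 1 / (2 * (i : ℝ) ^ 2) := by positivity
    have hb := hC (1 / (2 * (i : ℝ) ^ 2)) hε (by rw [div_lt_one (by positivity)]; nlinarith)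
    have h := le_eLpNorm_of_spike hp (k := i - 1) (by omega)
      (c := 2 ^ i / (2 * (i : ℝ) ^ 2 * M) - 1)
      (g := fun x => (moll1 η (1 / (2 * (i : ℝ) ^ 2)) spikes x - spikes x)
        / moll1 η (1 / (2 * (i : ℝ) ^ 2)) spikes x)
      (fun x hx => by
        have hr := ratio_ge hη hM1 hM h7 hx
        have hpos := moll_pos hη hε (by omega) hx
        rw [sub_div, div_self hpos.ne', abs_sub_comm]
        refine le_trans ?_ (le_abs_self _)
        linarith)
    have h' := h.trans hb
    have hle1 : ((2 : ℝ)⁻¹ ^ i) ^ (1 / p) ≤ 1 :=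
      Real.rpow_le_one (by positivity) (pow_le_one₀ (by norm_num) (by norm_num)) hinv0.le
    rw [Nat.sub_add_cancel (by omega), sub_mul, div_mul_eq_mul_div, two_pow_mul_rpow, one_mul] at h'
    have heq : 1 / M * (2 : ℝ) ^ ((i : ℝ) * (1 - 1 / p)) / (2 * (i : ℝ) ^ 2)
        = (2 : ℝ) ^ ((i : ℝ) * (1 - 1 / p)) / (2 * (i : ℝ) ^ 2 * M) := by field_simp
    rw [heq] at hi
    have h'' := h'.trans (ENNReal.ofReal_le_ofReal (le_abs_self C))
    rw [ENNReal.ofReal_le_ofReal_iff (abs_nonneg C)] at h''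
    linarith

end
end
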